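/- For every Scott-closed subset A of ℍ and every k ∈ ℕ, the set T^A_{≥k} = {s ∈ ℕ* : the set A_s = {m ∈ ℕ : (m,s) ∈ A} has at least k elements} is Scott-closed in 𝒯. Consequently, the map l : ℍ → 𝒯, (m,s) ↦ s, is a closed map for the Scott topologies: the image l(A) of any Scott-closed subset A of ℍ is Scott-closed in 𝒯. -/

import Mathlib

namespace HoZhao

variable {α : Type*}

/-- A set is Scott-closed if it is a lower set and contains the supremum of each of its
nonempty directed subsets. -/
def ScottClosed [Preorder α] (S : Set α) : Prop :=
  IsLowerSet S ∧ ∀ d : Set α, d ⊆ S → d.Nonempty → DirectedOn (· ≤ ·) d →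
    ∀ a : α, IsLUB d a → a ∈ S

/-- A nonempty set is irreducible if whenever it is covered by two Scott-closed sets it is
contained in one of them. -/
def ScottIrred [Preorder α] (A : Set α) : Prop :=
  A.Nonempty ∧ ∀ B C : Set α, ScottClosed B → ScottClosed C → A ⊆ B ∪ C → A ⊆ B ∨ A ⊆ C

/-- A dcpo: every nonempty directed subset has a supremum. -/
def IsDcpo (α : Type*) [Preorder α] : Prop :=
  ∀ d : Set α, d.Nonempty → DirectedOn (· ≤ ·) d → ∃ a : α, IsLUB d a

/-- The order sobrification: the poset of Scott-closed irreducible subsets, ordered by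
inclusion. -/
abbrev OrderSob (α : Type*) [Preorder α] :=
  {A : Set α // ScottClosed A ∧ ScottIrred A}

/-- The underlying set of the dcpo ℍ: pairs (m, s) with m ∈ ℕ and s ∈ ℕ*. -/
abbrev HPt := ℕ × List ℕ

/-- (m, n::s) <₁ (m, n'::s) iff n < n'. -/
def hlt1 (p q : HPt) : Prop :=
  ∃ (m n n' : ℕ) (s : List ℕ), n < n' ∧ p = (m, n :: s) ∧ q = (m, n' :: s)

/-- (m, t++s) <₂ (m, s) iff t ≠ ε. -/
def hlt2 (p q : HPt) : Prop :=
  ∃ (m : ℕ) (t s : List ℕ), t ≠ [] ∧ p = (m, t ++ s) ∧ q = (m, s)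

/-- (m, t++s) <₃ (m', s) iff t ≠ ε and min(t) ≤ m'. -/
def hlt3 (p q : HPt) : Prop :=
  ∃ (m m' : ℕ) (t s : List ℕ), t ≠ [] ∧ t.minimum ≤ (m' : ℕ) ∧
    p = (m, t ++ s) ∧ q = (m', s)

/-- The strict order < on ℍ: <₁ ∪ <₂ ∪ <₃ ∪ (<₂;<₁) ∪ (<₃;<₁). -/
def hlt (p q : HPt) : Prop :=
  hlt1 p q ∨ hlt2 p q ∨ hlt3 p q ∨ (∃ r, hlt2 p r ∧ hlt1 r q) ∨ (∃ r, hlt3 p r ∧ hlt1 r q)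

/-- The order ≤ on ℍ: < together with equality. -/
def hle (p q : HPt) : Prop := hlt p q ∨ p = q

/-- Least upper bound with respect to a relation r. -/
def IsLubRel {γ : Type*} (r : γ → γ → Prop) (s : Set γ) (a : γ) : Prop :=
  (∀ x ∈ s, r x a) ∧ ∀ b, (∀ x ∈ s, r x b) → r a b

/-- Scott-closedness with respect to a relation r: a lower set containing the r-suprema of
its nonempty r-directed subsets. -/
def ScottClosedRel {γ : Type*} (r : γ → γ → Prop) (S : Set γ) : Prop :=
  (∀ x y, r x y → y ∈ S → x ∈ S) ∧
  ∀ d : Set γ, d ⊆ S → d.Nonempty → DirectedOn r d → ∀ a, IsLubRel r d a → a ∈ S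

/-- Irreducibility with respect to a relation r. -/
def ScottIrredRel {γ : Type*} (r : γ → γ → Prop) (A : Set γ) : Prop :=
  A.Nonempty ∧ ∀ B C : Set γ, ScottClosedRel r B → ScottClosedRel r C → A ⊆ B ∪ C →
    A ⊆ B ∨ A ⊆ C

/-- n::u ⊏₁ n'::u iff n < n'. -/
def tlt1 (s t : List ℕ) : Prop := ∃ (n n' : ℕ) (u : List ℕ), n < n' ∧ s = n :: u ∧ t = n' :: u

/-- u++t ⊏₂ t iff u ≠ ε. -/
def tlt2 (s t : List ℕ) : Prop := ∃ u : List ℕ, u ≠ [] ∧ s = u ++ t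

/-- The strict order ⊏ on the tree 𝒯: ⊏₁ ∪ ⊏₂ ∪ (⊏₂;⊏₁). -/
def tlt (s t : List ℕ) : Prop := tlt1 s t ∨ tlt2 s t ∨ ∃ r, tlt2 s r ∧ tlt1 r t

/-- The order ⊑ on 𝒯: ⊏ together with equality. -/
def tle (s t : List ℕ) : Prop := tlt s t ∨ s = t

theorem hle_sup (m : ℕ) (s : List ℕ) (b : HPt)
    (h : hle (m, (b.1 + b.2.sum + 1) :: s) b) : hle (m, s) b := by
  obtain ⟨p, u⟩ := b
  simp only at h
  generalize hN : p + u.sum + 1 = N at h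
  rcases h with (⟨m1, n, n', v, hn, h1, h2⟩ | ⟨m1, t, v, ht, h1, h2⟩ |
    ⟨m1, m', t, v, ht, hmin, h1, h2⟩ | ⟨r, ⟨m1, t, v, ht, h1, h2⟩, ⟨m2, n, n', w, hn, h3, h4⟩⟩ |
    ⟨r, ⟨m1, m', t, v, ht, hmin, h1, h2⟩, ⟨m2, n, n', w, hn, h3, h4⟩⟩) | h
  · simp only [Prod.mk.injEq, List.cons.injEq] at h1 h2
    obtain ⟨rfl, rfl, rfl⟩ := h1
    obtain ⟨rfl, rfl⟩ := h2
    simp at hN; omega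
  · obtain _ | ⟨c, t⟩ := t
    · exact absurd rfl ht
    simp only [Prod.mk.injEq, List.cons_append, List.cons.injEq] at h1 h2
    obtain ⟨rfl, rfl, rfl⟩ := h1
    obtain ⟨rfl, rfl⟩ := h2
    by_cases h0 : t = []
    · subst h0; exact Or.inr rfl
    · exact Or.inl (Or.inr (Or.inl ⟨_, t, _, h0, rfl, rfl⟩))
  · obtain _ | ⟨c, t⟩ := t
    · exact absurd rfl ht
    simp only [Prod.mk.injEq, List.cons_append, List.cons.injEq] at h1 h2
    obtain ⟨rfl, rfl, rfl⟩ := h1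
    obtain ⟨rfl, rfl⟩ := h2
    rw [List.minimum_cons, min_le_iff] at hmin
    rcases hmin with hmin | hmin
    · have : N ≤ p := WithTop.coe_le_coe.1 hmin
      omega
    by_cases h0 : t = []
    · subst h0; simp at hmin
    · exact Or.inl (Or.inr (Or.inr (Or.inl ⟨_, _, t, _, h0, hmin, rfl, rfl⟩)))
  · obtain _ | ⟨c, t⟩ := t
    · exact absurd rfl ht
    subst h2
    simp only [Prod.mk.injEq, List.cons_append, List.cons.injEq] at h1 h3 h4
    obtain ⟨rfl, rfl, rfl⟩ := h1
    obtain ⟨rfl, rfl⟩ := h3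
    obtain ⟨rfl, rfl⟩ := h4
    by_cases h0 : t = []
    · subst h0; exact Or.inl (Or.inl ⟨_, _, _, _, hn, rfl, rfl⟩)
    · exact Or.inl (Or.inr (Or.inr (Or.inr (Or.inl
        ⟨_, ⟨_, t, _, h0, rfl, rfl⟩, ⟨_, _, _, _, hn, rfl, rfl⟩⟩))))
  · obtain _ | ⟨c, t⟩ := t
    · exact absurd rfl ht
    subst h2
    simp only [Prod.mk.injEq, List.cons_append, List.cons.injEq] at h1 h3 h4
    obtain ⟨rfl, rfl, rfl⟩ := h1
    obtain ⟨rfl, rfl⟩ := h3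
    obtain ⟨rfl, rfl⟩ := h4
    rw [List.minimum_cons, min_le_iff] at hmin
    rcases hmin with hmin | hmin
    · have : N ≤ p := WithTop.coe_le_coe.1 hmin
      omega
    by_cases h0 : t = []
    · subst h0; simp at hmin
    · exact Or.inl (Or.inr (Or.inr (Or.inr (Or.inr
        ⟨_, ⟨_, _, t, _, h0, hmin, rfl, rfl⟩, ⟨_, _, _, _, hn, rfl, rfl⟩⟩))))
  · simp only [Prod.mk.injEq] at h
    obtain ⟨rfl, rfl⟩ := h
    simp at hN; omega

theorem mem_of_cons {A : Set HPt} (hA : ScottClosedRel hle A) {m : ℕ} {s : List ℕ}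
    (h : ∀ n, ((m, n :: s) : HPt) ∈ A) : ((m, s) : HPt) ∈ A := by
  refine hA.2 (Set.range fun n => ((m, n :: s) : HPt)) ?_ ⟨_, 0, rfl⟩ ?_ (m, s) ⟨?_, ?_⟩
  · rintro _ ⟨n, rfl⟩; exact h n
  · have key : ∀ n n' : ℕ, n ≤ n' → hle (m, n :: s) (m, n' :: s) := by
      intro n n' hn
      rcases hn.lt_or_eq with hn | rfl
      · exact Or.inl (Or.inl ⟨_, _, _, _, hn, rfl, rfl⟩)
      · exact Or.inr rfl
    rintro _ ⟨n, rfl⟩ _ ⟨n', rfl⟩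
    exact ⟨_, ⟨max n n', rfl⟩, key _ _ (le_max_left _ _), key _ _ (le_max_right _ _)⟩
  · rintro _ ⟨n, rfl⟩
    exact Or.inl (Or.inr (Or.inl ⟨m, [n], s, by simp, rfl, rfl⟩))
  · intro b hb
    exact hle_sup m s b (hb _ ⟨_, rfl⟩)

theorem hle_of_tle {s t : List ℕ} (m : ℕ) (h : tle s t) : hle (m, s) (m, t) := by
  rcases h with (⟨n, n', u, hn, rfl, rfl⟩ | ⟨u, hu, rfl⟩ | ⟨r, ⟨u, hu, rfl⟩, ⟨n, n', v, hn, rfl, rfl⟩⟩) | rfl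
  · exact Or.inl (Or.inl ⟨_, _, _, _, hn, rfl, rfl⟩)
  · exact Or.inl (Or.inr (Or.inl ⟨_, _, _, hu, rfl, rfl⟩))
  · exact Or.inl (Or.inr (Or.inr (Or.inr (Or.inl
        ⟨_, ⟨_, u, _, hu, rfl, rfl⟩, ⟨_, _, _, _, hn, rfl, rfl⟩⟩))))
  · exact Or.inr rfl

theorem univ_of_infinite {A : Set HPt} (hA : ScottClosedRel hle A) {s : List ℕ}
    (h : {m : ℕ | ((m, s) : HPt) ∈ A}.Infinite) (m : ℕ) : ((m, s) : HPt) ∈ A := by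
  refine mem_of_cons hA fun n => ?_
  obtain ⟨m', hm', hlt⟩ := h.exists_gt n
  refine hA.1 _ _ (Or.inl (Or.inr (Or.inr (Or.inl
    ⟨m, m', [n], s, by simp, ?_, rfl, rfl⟩)))) hm'
  rw [List.minimum_singleton]
  exact WithTop.coe_le_coe.2 hlt.le

theorem tle_cons_tail {y u : List ℕ} {n : ℕ} (h : tle y (n :: u)) : tle y u := by
  refine Or.inl (Or.inr (Or.inl ?_))
  rcases h with (⟨n, n', u, hn, rfl, h⟩ | ⟨v, hu, rfl⟩ | ⟨r, ⟨u, hu, rfl⟩, ⟨n, n', v, hn, rfl, h⟩⟩) | rfl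
  · obtain ⟨rfl, rfl⟩ := List.cons.inj h
    exact ⟨[n], by simp, rfl⟩
  · exact ⟨v ++ [n], by simp, by simp⟩
  · obtain ⟨rfl, rfl⟩ := List.cons.inj h
    exact ⟨u ++ [n], by simp, by simp⟩
  · exact ⟨[n], by simp, rfl⟩

theorem tle_length {s t : List ℕ} (h : tle s t) (hl : s.length ≤ t.length) :
    s = t ∨ tlt1 s t := by
  rcases h with (h | ⟨v, hu, rfl⟩ | ⟨r, ⟨u, hu, rfl⟩, ⟨n, n', v, hn, rfl, rfl⟩⟩) | rfl
  · exact Or.inr h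
  · have := List.length_pos_iff.2 hu
    simp only [List.length_append, List.length_cons] at hl; omega
  · have := List.length_pos_iff.2 hu
    simp only [List.length_append, List.length_cons] at hl; omega
  · exact Or.inl rfl

theorem directed_cases (d : Set (List ℕ)) (hne : d.Nonempty) (hd : DirectedOn tle d) :
    (∃ x ∈ d, ∀ y ∈ d, tle y x) ∨
    ∃ u : List ℕ, (∀ y ∈ d, tle y u) ∧ ∀ n, ∃ n', n < n' ∧ n' :: u ∈ d := by
  obtain ⟨x, hx, hmin⟩ : ∃ x ∈ d, ∀ y ∈ d, x.length ≤ y.length := by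
    obtain ⟨x, hx, h⟩ := WellFounded.has_min
      (InvImage.wf (List.length (α := ℕ)) Nat.lt_wfRel.wf) d hne
    exact ⟨x, hx, fun y hy => not_lt.1 (h y hy)⟩
  by_cases hmax : ∃ x ∈ d, ∀ y ∈ d, tle y x
  · exact Or.inl hmax
  right
  -- every element of minimal length is strictly dominated
  have step : ∀ w ∈ d, w.length = x.length → ∃ w' ∈ d, tlt1 w w' := by
    intro w hw hl
    by_contra hcon
    apply hmax
    refine ⟨w, hw, fun y hy => ?_⟩
    obtain ⟨z, hz, h1, h2⟩ := hd w hw y hy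
    rcases tle_length h1 (hl ▸ hmin z hz) with rfl | h
    · exact h2
    · exact absurd ⟨z, hz, h⟩ hcon
  obtain ⟨_, hx', n0, n1, u, hn, rfl, rfl⟩ := step x hx rfl
  refine ⟨u, fun y hy => ?_, fun n => ?_⟩
  · obtain ⟨z, hz, h1, h2⟩ := hd _ hx y hy
    rcases tle_length h1 (hmin z hz) with rfl | ⟨a, b, c, hab, h3, rfl⟩
    · exact tle_cons_tail h2
    · obtain ⟨rfl, rfl⟩ := List.cons.inj h3
      exact tle_cons_tail h2
  · induction n with
    | zero => exact ⟨n1, by omega, hx'⟩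
    | succ n ih =>
      obtain ⟨n', hn', hm⟩ := ih
      obtain ⟨_, h1, a, b, c, hab, h3, rfl⟩ := step _ hm (by simp)
      obtain ⟨rfl, rfl⟩ := List.cons.inj h3
      exact ⟨b, by omega, h1⟩

theorem level_closed (A : Set HPt) (hA : ScottClosedRel hle A) (k : ℕ) :
    ScottClosedRel tle {s : List ℕ | (k : ℕ∞) ≤ {m : ℕ | ((m, s) : HPt) ∈ A}.encard} := by
  have anti : ∀ s t, tle s t → {m : ℕ | ((m, t) : HPt) ∈ A} ⊆ {m : ℕ | ((m, s) : HPt) ∈ A} :=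
    fun s t h m hm => hA.1 _ _ (hle_of_tle m h) hm
  have low : ∀ s t, tle s t → (k : ℕ∞) ≤ {m : ℕ | ((m, t) : HPt) ∈ A}.encard →
      (k : ℕ∞) ≤ {m : ℕ | ((m, s) : HPt) ∈ A}.encard :=
    fun s t h hk => hk.trans (Set.encard_le_encard (anti s t h))
  refine ⟨low, fun d hdS hne hd a ha => ?_⟩
  rcases directed_cases d hne hd with ⟨x, hx, hub⟩ | ⟨u, hub, hN⟩
  · exact low _ _ (ha.2 x hub) (hdS hx)
  refine low _ _ (ha.2 u hub) ?_
  have tl : ∀ n n' : ℕ, n ≤ n' → tle (n :: u) (n' :: u) := by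
    intro n n' h
    rcases h.lt_or_eq with h | rfl
    · exact Or.inl (Or.inl ⟨_, _, _, h, rfl, rfl⟩)
    · exact Or.inr rfl
  have hk : ∀ n, (k : ℕ∞) ≤ {m : ℕ | ((m, n :: u) : HPt) ∈ A}.encard := by
    intro n
    obtain ⟨n', h, hm⟩ := hN n
    exact low _ _ (tl _ _ h.le) (hdS hm)
  by_cases hinf : ∀ n, {m : ℕ | ((m, n :: u) : HPt) ∈ A}.Infinite
  · have : {m : ℕ | ((m, u) : HPt) ∈ A} = Set.univ :=
      Set.eq_univ_of_forall fun m => mem_of_cons hA fun n => univ_of_infinite hA (hinf n) m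
    rw [this, Set.encard_univ]
    simp
  · push Not at hinf
    obtain ⟨n0, hfin⟩ := hinf
    obtain ⟨n1, h01, hmin⟩ : ∃ n1, n0 ≤ n1 ∧ ∀ n, n0 ≤ n →
        {m : ℕ | ((m, n1 :: u) : HPt) ∈ A}.ncard ≤ {m : ℕ | ((m, n :: u) : HPt) ∈ A}.ncard := by
      obtain ⟨x, hx, h⟩ := WellFounded.has_min
        (InvImage.wf (fun n : ℕ => {m : ℕ | ((m, n :: u) : HPt) ∈ A}.ncard) Nat.lt_wfRel.wf)
        (Set.Ici n0) ⟨n0, Set.mem_Ici.2 le_rfl⟩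
      exact ⟨x, hx, fun y hy => not_lt.1 (h y hy)⟩
    refine (hk n1).trans (Set.encard_le_encard fun m hm => mem_of_cons hA fun n => ?_)
    rcases le_total n n1 with h | h
    · exact anti _ _ (tl _ _ h) hm
    · have hf1 := hfin.subset (anti _ _ (tl _ _ h01))
      have := Set.eq_of_subset_of_ncard_le (anti _ _ (tl _ _ h)) (hmin n (h01.trans h)) hf1
      rw [← this] at hm
      exact hm

/-- for every Scott-closed A ⊆ ℍ and every k, the set
T^A_{≥k} = {s : A_s has at least k elements} is Scott-closed in 𝒯; consequently the level
map l : ℍ → 𝒯 is a closed map. -/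
theorem level_sets_closed_and_level_map_closed :
    (∀ A : Set HPt, ScottClosedRel hle A → ∀ k : ℕ,
      ScottClosedRel tle {s : List ℕ | (k : ℕ∞) ≤ {m : ℕ | ((m, s) : HPt) ∈ A}.encard}) ∧
    (∀ A : Set HPt, ScottClosedRel hle A → ScottClosedRel tle (Prod.snd '' A)) := by
  refine ⟨level_closed, fun A hA => ?_⟩
  have h := level_closed A hA 1
  have e : {s : List ℕ | ((1 : ℕ) : ℕ∞) ≤ {m : ℕ | ((m, s) : HPt) ∈ A}.encard} =
      Prod.snd '' A := by
    ext s
    simp only [Set.mem_ofPred_eq, Nat.cast_one, Set.one_le_encard_iff_nonempty, Set.mem_image]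
    constructor
    · rintro ⟨m, hm⟩
      exact ⟨(m, s), hm, rfl⟩
    · rintro ⟨⟨m, s⟩, hm, rfl⟩
      exact ⟨m, hm⟩
  rwa [e] at h

end HoZhao
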